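/- arXiv:1503.06732 — 7 statements merged into one kernel-verified Lean document; each statement's English description precedes it below -/
import Mathlib

section
/- Let b ∈ (0, ∞] and let g : [0, b) → ℝ be three times continuously differentiable and satisfy the ODE 4g(η) − η⁴g(η) − 4ηg'(η) − 4η²g(η)g'(η) + 8η²g''(η) + 4η³g'''(η) = 0 for all η ∈ [0, b), with g(0) = 0, g''(0) = 0 and g'(0) > 0. Then g'(η) > 0 for all η ∈ [0, b). -/
/-- Let `b ∈ (0, ∞]` and let `g : [0, b) → ℝ` be three times continuously
differentiable and satisfy the ODE
`4g(η) − η⁴g(η) − 4ηg'(η) − 4η²g(η)g'(η) + 8η²g''(η) + 4η³g'''(η) = 0`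
for all `η ∈ [0, b)`, with `g(0) = 0`, `g''(0) = 0` and `g'(0) > 0`.
Then `g'(η) > 0` for all `η ∈ [0, b)`. -/
theorem stmt0 (b : EReal) (hb : 0 < b)
    (g g' g'' g''' : ℝ → ℝ)
    (hg : ∀ η ∈ {x : ℝ | 0 ≤ x ∧ (x : EReal) < b},
      HasDerivWithinAt g (g' η) {x : ℝ | 0 ≤ x ∧ (x : EReal) < b} η)
    (hg' : ∀ η ∈ {x : ℝ | 0 ≤ x ∧ (x : EReal) < b},
      HasDerivWithinAt g' (g'' η) {x : ℝ | 0 ≤ x ∧ (x : EReal) < b} η)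
    (hg'' : ∀ η ∈ {x : ℝ | 0 ≤ x ∧ (x : EReal) < b},
      HasDerivWithinAt g'' (g''' η) {x : ℝ | 0 ≤ x ∧ (x : EReal) < b} η)
    (hg''' : ContinuousOn g''' {x : ℝ | 0 ≤ x ∧ (x : EReal) < b})
    (hode : ∀ η ∈ {x : ℝ | 0 ≤ x ∧ (x : EReal) < b},
      4 * g η - η ^ 4 * g η - 4 * η * g' η - 4 * η ^ 2 * g η * g' η
        + 8 * η ^ 2 * g'' η + 4 * η ^ 3 * g''' η = 0)
    (h0 : g 0 = 0) (h2 : g'' 0 = 0) (h1 : 0 < g' 0) :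
    ∀ η ∈ {x : ℝ | 0 ≤ x ∧ (x : EReal) < b}, 0 < g' η := by
  intro e he
  by_contra hneg
  have hneg : g' e ≤ 0 := not_lt.mp hneg
  have hsub : ∀ x ∈ Set.Icc (0:ℝ) e, x ∈ {x : ℝ | 0 ≤ x ∧ (x : EReal) < b} := fun x hx =>
    ⟨hx.1, lt_of_le_of_lt (EReal.coe_le_coe_iff.mpr hx.2) he.2⟩
  have he0 : 0 ≤ e := he.1
  generalize {x : ℝ | 0 ≤ x ∧ (x : EReal) < b} = D at *
  have hc1 : ContinuousOn g' (Set.Icc 0 e) := fun x hx =>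
    ((hg' x (hsub x hx)).continuousWithinAt).mono hsub
  have hcomp : IsCompact (Set.Icc 0 e ∩ g' ⁻¹' Set.Iic 0) :=
    isCompact_Icc.of_isClosed_subset
      (hc1.preimage_isClosed_of_isClosed isClosed_Icc isClosed_Iic) Set.inter_subset_left
  obtain ⟨c, ⟨hcI, hcneg⟩, hcl⟩ := hcomp.exists_isLeast ⟨e, ⟨he0, le_rfl⟩, hneg⟩
  have hcneg : g' c ≤ 0 := hcneg
  have hcpos : 0 < c := by
    rcases hcI.1.eq_or_lt with h | h
    · rw [← h] at hcneg; linarith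
    · exact h
  have hpos : ∀ x, 0 ≤ x → x < c → 0 < g' x := by
    intro x hx0 hxc
    by_contra h
    exact absurd (hcl ⟨⟨hx0, hxc.le.trans hcI.2⟩, not_lt.mp h⟩) (not_le.mpr hxc)
  have hsubc : Set.Icc 0 c ⊆ D := fun x hx => hsub x ⟨hx.1, hx.2.trans hcI.2⟩
  have hD : ∀ x ∈ Set.Ioo 0 c, D ∈ nhds x := fun x hx =>
    Filter.mem_of_superset (Icc_mem_nhds hx.1 hx.2) hsubc
  have cg : ContinuousOn g (Set.Icc 0 c) := fun x hx =>
    ((hg x (hsubc hx)).continuousWithinAt).mono hsubc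
  have cg' : ContinuousOn g' (Set.Icc 0 c) := fun x hx =>
    ((hg' x (hsubc hx)).continuousWithinAt).mono hsubc
  have cg'' : ContinuousOn g'' (Set.Icc 0 c) := fun x hx =>
    ((hg'' x (hsubc hx)).continuousWithinAt).mono hsubc
  have gmono : StrictMonoOn g (Set.Icc 0 c) := by
    apply strictMonoOn_of_deriv_pos (convex_Icc 0 c) cg
    intro x hx
    rw [interior_Icc] at hx
    rw [((hg x (hsubc ⟨hx.1.le, hx.2.le⟩)).hasDerivAt (hD x hx)).deriv]
    exact hpos x hx.1.le hx.2
  have gpos : ∀ x, 0 < x → x ≤ c → 0 < g x := by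
    intro x hx hxc
    have := gmono ⟨le_rfl, hcpos.le⟩ ⟨hx.le, hxc⟩ hx
    rwa [h0] at this
  have Amono : MonotoneOn (fun x => x * g'' x + g' x - g x / x) (Set.Ioc 0 c) := by
    have hs : Set.Ioc 0 c ⊆ Set.Icc 0 c := Set.Ioc_subset_Icc_self
    have hder : ∀ x ∈ Set.Ioo 0 c, HasDerivAt (fun x => x * g'' x + g' x - g x / x)
        (1 * g'' x + x * g''' x + g'' x - (g' x * x - g x * 1) / x ^ 2) x := by
      intro x hx
      have hxD := hsubc ⟨hx.1.le, hx.2.le⟩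
      exact (((hasDerivAt_id' x).mul ((hg'' x hxD).hasDerivAt (hD x hx))).add
        ((hg' x hxD).hasDerivAt (hD x hx))).sub
        (((hg x hxD).hasDerivAt (hD x hx)).div (hasDerivAt_id' x) hx.1.ne')
    apply monotoneOn_of_deriv_nonneg (convex_Ioc 0 c)
    · exact ((continuousOn_id.mul (cg''.mono hs)).add (cg'.mono hs)).sub
        ((cg.mono hs).div continuousOn_id fun x hx => hx.1.ne')
    · rw [interior_Ioc]
      exact fun x hx => (hder x hx).differentiableAt.differentiableWithinAt
    · rw [interior_Ioc]
      intro x hx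
      rw [(hder x hx).deriv]
      have hx0 := hx.1
      have h1 := hode x (hsubc ⟨hx.1.le, hx.2.le⟩)
      have h3 := gpos x hx.1 hx.2.le
      have h4 := hpos x hx.1.le hx.2
      have : 1 * g'' x + x * g''' x + g'' x - (g' x * x - g x * 1) / x ^ 2
          = x ^ 2 * g x / 4 + g x * g' x := by
        field_simp
        linear_combination h1
      rw [this]
      positivity
  have hle : nhdsWithin (0:ℝ) (Set.Ioc 0 c) ≤ nhdsWithin 0 (Set.Icc 0 c) :=
    nhdsWithin_mono _ Set.Ioc_subset_Icc_self
  have h0m : (0:ℝ) ∈ Set.Icc 0 c := ⟨le_rfl, hcpos.le⟩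
  have hlim : Filter.Tendsto (fun x => x * g'' x + g' x - g x / x)
      (nhdsWithin 0 (Set.Ioc 0 c)) (nhds 0) := by
    have t1 := (hasDerivWithinAt_iff_tendsto_slope' (by simp)).mp
      ((hg 0 (hsubc h0m)).mono (Set.Ioc_subset_Icc_self.trans hsubc))
    have t1' : Filter.Tendsto (fun x => g x / x) (nhdsWithin 0 (Set.Ioc 0 c)) (nhds (g' 0)) := by
      refine t1.congr fun x => ?_
      simp [slope_def_field, h0]
    have t2 : Filter.Tendsto (fun x => x * g'' x + g' x)
        (nhdsWithin 0 (Set.Ioc 0 c)) (nhds (0 * g'' 0 + g' 0)) :=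
      (((continuousOn_id.mul cg'').add cg') 0 h0m).mono_left hle
    simpa using t2.sub t1'
  haveI : (nhdsWithin (0:ℝ) (Set.Ioc 0 c)).NeBot := by
    rw [nhdsWithin_Ioc_eq_nhdsGT hcpos]; infer_instance
  have hA : 0 ≤ c * g'' c + g' c - g c / c := by
    refine le_of_tendsto hlim ?_
    filter_upwards [self_mem_nhdsWithin] with x hx
    exact Amono hx ⟨hcpos, le_rfl⟩ hx.2
  have hg2 : g'' c ≤ 0 := by
    have hd := (hg' c (hsubc ⟨hcpos.le, le_rfl⟩)).mono (Set.Ico_subset_Icc_self.trans hsubc)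
    have t := (hasDerivWithinAt_iff_tendsto_slope' (by simp)).mp hd
    haveI : (nhdsWithin c (Set.Ico 0 c)).NeBot := by
      rw [nhdsWithin_Ico_eq_nhdsLT hcpos]; infer_instance
    refine le_of_tendsto t ?_
    filter_upwards [self_mem_nhdsWithin] with x hx
    rw [slope_def_field]
    have := hpos x hx.1 hx.2
    have hxc := hx.2
    exact div_nonpos_of_nonneg_of_nonpos (by linarith) (by linarith)
  have h5 : 0 < g c / c := div_pos (gpos c hcpos le_rfl) hcpos
  have h6 : c * g'' c ≤ 0 := mul_nonpos_of_nonneg_of_nonpos hcpos.le hg2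
  linarith
end

section
/- Let η₀ > 0 and let g : [0, η₀] → ℝ be three times continuously differentiable, satisfy the ODE 4g(η) − η⁴g(η) − 4ηg'(η) − 4η²g(η)g'(η) + 8η²g''(η) + 4η³g'''(η) = 0 on [0, η₀], with g(0) = 0, g''(0) = 0, and suppose g(η) > 0 and g'(η) > 0 for all η ∈ (0, η₀). Then η³g''(η) − η²g'(η) + ηg(η) > 0 for all η ∈ (0, η₀]. -/
/-- Let `η₀ > 0` and let `g : [0, η₀] → ℝ` be `C³`, satisfy the ODE on `[0, η₀]`,
with `g(0) = 0`, `g''(0) = 0`, and suppose `g(η) > 0` and `g'(η) > 0` for all `η ∈ (0, η₀)`.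
Then `η³g''(η) − η²g'(η) + ηg(η) > 0` for all `η ∈ (0, η₀]`. -/
theorem stmt2 (η₀ : ℝ) (hη₀ : 0 < η₀)
    (g g' g'' g''' : ℝ → ℝ)
    (hg : ∀ η ∈ Set.Icc 0 η₀, HasDerivWithinAt g (g' η) (Set.Icc 0 η₀) η)
    (hg' : ∀ η ∈ Set.Icc 0 η₀, HasDerivWithinAt g' (g'' η) (Set.Icc 0 η₀) η)
    (hg'' : ∀ η ∈ Set.Icc 0 η₀, HasDerivWithinAt g'' (g''' η) (Set.Icc 0 η₀) η)
    (hg''' : ContinuousOn g''' (Set.Icc 0 η₀))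
    (hode : ∀ η ∈ Set.Icc 0 η₀,
      4 * g η - η ^ 4 * g η - 4 * η * g' η - 4 * η ^ 2 * g η * g' η
        + 8 * η ^ 2 * g'' η + 4 * η ^ 3 * g''' η = 0)
    (h0 : g 0 = 0) (h2 : g'' 0 = 0)
    (hgpos : ∀ η ∈ Set.Ioo 0 η₀, 0 < g η)
    (hg'pos : ∀ η ∈ Set.Ioo 0 η₀, 0 < g' η) :
    ∀ η ∈ Set.Ioc 0 η₀, 0 < η ^ 3 * g'' η - η ^ 2 * g' η + η * g η := by
  have hW : ∀ η ∈ Set.Icc 0 η₀,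
      HasDerivWithinAt (fun η => η ^ 3 * g'' η - η ^ 2 * g' η + η * g η)
        (η ^ 4 * g η / 4 + η ^ 2 * g η * g' η) (Set.Icc 0 η₀) η := by
    intro η hη
    have hid := hasDerivWithinAt_id η (Set.Icc 0 η₀)
    have h := (((hid.pow 3).mul (hg'' η hη)).sub ((hid.pow 2).mul (hg' η hη))).add
      (hid.mul (hg η hη))
    refine h.congr_deriv ?_
    have := hode η hη
    simp
    linarith
  have hmono : StrictMonoOn (fun η => η ^ 3 * g'' η - η ^ 2 * g' η + η * g η)
      (Set.Icc 0 η₀) := by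
    refine strictMonoOn_of_deriv_pos (convex_Icc 0 η₀)
      (fun η hη => (hW η hη).continuousWithinAt) ?_
    intro η hη
    rw [interior_Icc] at hη
    have hd := (hW η (Set.Ioo_subset_Icc_self hη)).hasDerivAt (Icc_mem_nhds hη.1 hη.2)
    rw [hd.deriv]
    have h1 := hη.1
    have h3 := hgpos η hη
    have h4 := hg'pos η hη
    positivity
  intro η hη
  have := hmono (Set.left_mem_Icc.2 hη₀.le) (Set.Ioc_subset_Icc_self hη) hη.1
  simpa using this
end

section
/- Let η₀ > 0 and let g : [0, η₀] → ℝ be three times continuously differentiable, satisfy the ODE 4g(η) − η⁴g(η) − 4ηg'(η) − 4η²g(η)g'(η) + 8η²g''(η) + 4η³g'''(η) = 0 on [0, η₀], with g(0) = 0, g''(0) = 0 and g'(0) > 0. Then it is impossible that g'(η) > 0 for all η ∈ (0, η₀) and g'(η₀) = 0; i.e., g' has no first zero in (0, η₀]. -/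
/-- Let `η₀ > 0` and let `g : [0, η₀] → ℝ` be `C³`, satisfy the ODE on `[0, η₀]`,
with `g(0) = 0`, `g''(0) = 0` and `g'(0) > 0`. Then it is impossible that `g'(η) > 0` for all
`η ∈ (0, η₀)` and `g'(η₀) = 0`; i.e. `g'` has no first zero in `(0, η₀]`. -/
theorem stmt4 (η₀ : ℝ) (hη₀ : 0 < η₀)
    (g g' g'' g''' : ℝ → ℝ)
    (hg : ∀ η ∈ Set.Icc 0 η₀, HasDerivWithinAt g (g' η) (Set.Icc 0 η₀) η)
    (hg' : ∀ η ∈ Set.Icc 0 η₀, HasDerivWithinAt g' (g'' η) (Set.Icc 0 η₀) η)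
    (hg'' : ∀ η ∈ Set.Icc 0 η₀, HasDerivWithinAt g'' (g''' η) (Set.Icc 0 η₀) η)
    (hg''' : ContinuousOn g''' (Set.Icc 0 η₀))
    (hode : ∀ η ∈ Set.Icc 0 η₀,
      4 * g η - η ^ 4 * g η - 4 * η * g' η - 4 * η ^ 2 * g η * g' η
        + 8 * η ^ 2 * g'' η + 4 * η ^ 3 * g''' η = 0)
    (h0 : g 0 = 0) (h2 : g'' 0 = 0) (h1 : 0 < g' 0) :
    ¬ ((∀ η ∈ Set.Ioo 0 η₀, 0 < g' η) ∧ g' η₀ = 0) := by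
  rintro ⟨hpos, hend⟩
  have hcg : ContinuousOn g (Set.Icc 0 η₀) := fun x hx => (hg x hx).continuousWithinAt
  have hcg1 : ContinuousOn g' (Set.Icc 0 η₀) := fun x hx => (hg' x hx).continuousWithinAt
  have hcg2 : ContinuousOn g'' (Set.Icc 0 η₀) := fun x hx => (hg'' x hx).continuousWithinAt
  have hsub : Set.Ioc 0 η₀ ⊆ Set.Icc 0 η₀ := Set.Ioc_subset_Icc_self
  have h0m : (0 : ℝ) ∈ Set.Icc 0 η₀ := ⟨le_rfl, hη₀.le⟩
  have hem : η₀ ∈ Set.Icc 0 η₀ := ⟨hη₀.le, le_rfl⟩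
  -- g is strictly increasing, hence positive
  have hmono : StrictMonoOn g (Set.Icc 0 η₀) := by
    apply strictMonoOn_of_hasDerivWithinAt_pos (f' := g') (convex_Icc _ _) hcg
    · intro x hx
      exact (hg x (interior_subset hx)).mono interior_subset
    · intro x hx
      rw [interior_Icc] at hx
      exact hpos x hx
  have hgpos : ∀ x ∈ Set.Ioc 0 η₀, 0 < g x := by
    intro x hx
    have := hmono h0m (hsub hx) hx.1
    rwa [h0] at this
  -- Q is the radial variable times the derivative of the Laplacian
  let Q : ℝ → ℝ := fun x => x * g'' x + g' x - g x / x
  have hQmono : StrictMonoOn Q (Set.Ioc 0 η₀) := by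
    apply strictMonoOn_of_hasDerivWithinAt_pos (f' := fun x =>
      (1 * g'' x + x * g''' x) + g'' x - (g' x * x - g x * 1) / x ^ 2) (convex_Ioc _ _)
    · apply ContinuousOn.sub
      · exact (continuousOn_id.mul (hcg2.mono hsub)).add (hcg1.mono hsub)
      · exact (hcg.mono hsub).div continuousOn_id (fun x hx => hx.1.ne')
    · intro x hx
      have hx1 := interior_subset hx
      have hs : interior (Set.Ioc 0 η₀) ⊆ Set.Icc 0 η₀ := interior_subset.trans hsub
      have a := (hg x (hsub hx1)).mono hs
      have b := (hg' x (hsub hx1)).mono hs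
      have c := (hg'' x (hsub hx1)).mono hs
      have d := hasDerivWithinAt_id x (interior (Set.Ioc 0 η₀))
      exact ((d.mul c).add b).sub (a.div d hx1.1.ne')
    · intro x hx
      rw [interior_Ioc] at hx
      have hx0 := hx.1
      have hx1 : x ∈ Set.Ioc 0 η₀ := ⟨hx.1, hx.2.le⟩
      have e := hode x (hsub hx1)
      have gp := hgpos x hx1
      have gp' := hpos x hx
      have key : (1 * g'' x + x * g''' x) + g'' x - (g' x * x - g x * 1) / x ^ 2
          = x ^ 2 * g x / 4 + g x * g' x := by
        field_simp
        linarith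
      rw [key]
      positivity
  have hQlim : Filter.Tendsto Q (nhdsWithin 0 (Set.Ioc 0 η₀)) (nhds 0) := by
    have t := hasDerivWithinAt_iff_tendsto_slope.1 (hg 0 h0m)
    rw [Set.Icc_sdiff_left] at t
    have t1 := (hcg1 0 h0m).mono hsub
    have t2 := (hcg2 0 h0m).mono hsub
    have t0 : Filter.Tendsto (fun x : ℝ => x) (nhdsWithin 0 (Set.Ioc 0 η₀)) (nhds 0) :=
      Filter.tendsto_id.mono_left nhdsWithin_le_nhds
    have r := ((t0.mul t2.tendsto).add t1.tendsto).sub t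
    simp only [zero_mul, zero_add, sub_self] at r
    refine r.congr ?_
    intro x
    simp [Q, slope_def_field, h0]
  have hhalf : 0 ≤ Q (η₀ / 2) := by
    have : (nhdsWithin 0 (Set.Ioc 0 η₀)).NeBot := left_nhdsWithin_Ioc_neBot hη₀
    refine le_of_tendsto hQlim ?_
    have h3 : ∀ᶠ x in nhdsWithin 0 (Set.Ioc 0 η₀), x < η₀ / 2 :=
      nhdsWithin_le_nhds (Iio_mem_nhds (by linarith))
    filter_upwards [h3, self_mem_nhdsWithin] with x hx hx'
    exact (hQmono hx' ⟨by linarith, by linarith⟩ hx).le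
  have hQend : 0 < Q η₀ :=
    hhalf.trans_lt (hQmono ⟨by linarith, by linarith⟩ ⟨hη₀, le_rfl⟩ (by linarith))
  have hneg : g'' η₀ ≤ 0 := by
    have t := hasDerivWithinAt_iff_tendsto_slope.1 (hg' η₀ hem)
    rw [Set.Icc_sdiff_right] at t
    have : (nhdsWithin η₀ (Set.Ico 0 η₀)).NeBot := right_nhdsWithin_Ico_neBot hη₀
    refine le_of_tendsto t ?_
    filter_upwards [self_mem_nhdsWithin] with x hx
    have hp : 0 ≤ g' x := by
      rcases hx.1.eq_or_lt with h | h
      · rw [← h]; exact h1.le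
      · exact (hpos x ⟨h, hx.2⟩).le
    rw [slope_def_field, hend]
    exact div_nonpos_of_nonneg_of_nonpos (by linarith) (by linarith [hx.2])
  have hge : 0 < g η₀ / η₀ := div_pos (hgpos η₀ ⟨hη₀, le_rfl⟩) hη₀
  have : η₀ * g'' η₀ ≤ 0 := mul_nonpos_of_nonneg_of_nonpos hη₀.le hneg
  simp only [Q, hend] at hQend
  linarith
end

section
/- Let η̄ ∈ (0, ∞] and let g : [0, η̄) → ℝ be three times continuously differentiable, satisfy the ODE 4g(η) − η⁴g(η) − 4ηg'(η) − 4η²g(η)g'(η) + 8η²g''(η) + 4η³g'''(η) = 0 on [0, η̄), with g(0) = 0, g''(0) = 0 and g'(0) > 0, and suppose g cannot be extended to a C³ solution of the same ODE on any strictly larger interval [0, η̄') with η̄' > η̄. Then η̄ < ∞, g'(η) > 0 for all η ∈ (0, η̄), and g(η) → +∞ as η → η̄ from the left. -/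
open Filter

noncomputable def odeR (t x y z : ℝ) : ℝ :=
  (t ^ 4 * x + 4 * t * y + 4 * t ^ 2 * x * y - 4 * x - 8 * t ^ 2 * z) / (4 * t ^ 3)

lemma ode_local (b p q r : ℝ) (hb : 0 < b) :
    ∃ ε > 0, ∃ F F' F'' : ℝ → ℝ, F b = p ∧ F' b = q ∧ F'' b = r ∧
      ∀ t ∈ Set.Ioo (b - ε) (b + ε), HasDerivAt F (F' t) t ∧ HasDerivAt F' (F'' t) t ∧
        HasDerivAt F'' (odeR t (F t) (F' t) (F'' t)) t := by
  let v : ℝ × ℝ × ℝ × ℝ → ℝ × ℝ × ℝ × ℝ := fun X =>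
    (1, X.2.2.1, X.2.2.2, odeR X.1 X.2.1 X.2.2.1 X.2.2.2)
  have hv : ContDiffAt ℝ 1 v (b, p, q, r) := by
    have h : ContDiffAt ℝ 1 (fun X : ℝ × ℝ × ℝ × ℝ => odeR X.1 X.2.1 X.2.2.1 X.2.2.2)
        (b, p, q, r) := by
      unfold odeR
      apply ContDiffAt.div
      · fun_prop
      · fun_prop
      · positivity
    have h1 : ContDiffAt ℝ 1 (fun X : ℝ × ℝ × ℝ × ℝ => X.2.2.1) (b, p, q, r) := by fun_prop
    have h2 : ContDiffAt ℝ 1 (fun X : ℝ × ℝ × ℝ × ℝ => X.2.2.2) (b, p, q, r) := by fun_prop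
    exact contDiffAt_const.prodMk (h1.prodMk (h2.prodMk h))
  obtain ⟨α, hα0, ε, hε, hα⟩ :=
    hv.exists_forall_mem_closedBall_exists_eq_forall_mem_Ioo_hasDerivAt₀ b
  have hd : ∀ t ∈ Set.Ioo (b - ε) (b + ε),
      HasDerivAt (fun t => (α t).1) 1 t ∧
      HasDerivAt (fun t => (α t).2.1) (α t).2.2.1 t ∧
      HasDerivAt (fun t => (α t).2.2.1) (α t).2.2.2 t ∧
      HasDerivAt (fun t => (α t).2.2.2) (odeR (α t).1 (α t).2.1 (α t).2.2.1 (α t).2.2.2) t := by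
    intro t ht
    have h := hα t ht
    exact ⟨h.fst, h.snd.fst, h.snd.snd.fst, h.snd.snd.snd⟩
  have hid : ∀ t ∈ Set.Ioo (b - ε) (b + ε), (α t).1 = t := by
    intro t ht
    have hbm : b ∈ Set.Ioo (b - ε) (b + ε) := ⟨by linarith, by linarith⟩
    have := (convex_Ioo (b - ε) (b + ε)).norm_image_sub_le_of_norm_hasDerivWithin_le
      (f := fun t => (α t).1 - t) (f' := fun _ => 0) (C := 0)
      (fun x hx => (((hd x hx).1.sub (hasDerivAt_id x)).congr_deriv (by simp)).hasDerivWithinAt)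
      (by simp) hbm ht
    simp only [hα0, sub_self, sub_zero, zero_mul] at this
    have := norm_le_zero_iff.1 this
    linarith
  refine ⟨ε, hε, fun t => (α t).2.1, fun t => (α t).2.2.1, fun t => (α t).2.2.2,
    by simp [hα0], by simp [hα0], by simp [hα0], fun t ht => ?_⟩
  obtain ⟨-, h1, h2, h3⟩ := hd t ht
  rw [hid t ht] at h3
  exact ⟨h1, h2, h3⟩

lemma lim_of_bdd_deriv (f f' : ℝ → ℝ) (a b C : ℝ) (hab : a < b)
    (hf : ∀ x ∈ Set.Ioo a b, HasDerivAt f (f' x) x) (hC : ∀ x ∈ Set.Ioo a b, |f' x| ≤ C) :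
    ∃ l, Tendsto f (nhdsWithin b (Set.Iio b)) (nhds l) := by
  have hl : LipschitzOnWith (Real.toNNReal C) f (Set.Ioo a b) := by
    apply (convex_Ioo a b).lipschitzOnWith_of_nnnorm_hasDerivWithin_le
      (fun x hx => (hf x hx).hasDerivWithinAt)
    intro x hx
    rw [← NNReal.coe_le_coe, coe_nnnorm, Real.norm_eq_abs]
    exact (hC x hx).trans (Real.le_coe_toNNReal C)
  obtain ⟨F, hF, hFe⟩ := hl.extend_real
  refine ⟨F b, ?_⟩
  refine Tendsto.congr' ?_ (hF.continuous.tendsto b |>.mono_left nhdsWithin_le_nhds)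
  filter_upwards [Ioo_mem_nhdsLT hab] with x hx
  exact (hFe hx).symm

lemma glue (f f' F F' : ℝ → ℝ) (b ε : ℝ) (hb : 0 < b) (hε : 0 < ε)
    (hf : ∀ x ∈ Set.Ioo 0 b, HasDerivAt f (f' x) x)
    (hF : ∀ t ∈ Set.Ioo (b - ε) (b + ε), HasDerivAt F (F' t) t)
    (hl : Tendsto f (nhdsWithin b (Set.Iio b)) (nhds (F b)))
    (hl' : Tendsto f' (nhdsWithin b (Set.Iio b)) (nhds (F' b))) (x : ℝ) (hx : 0 < x)
    (hxb : x < b + ε) :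
    HasDerivAt (fun x => if x < b then f x else F x) (if x < b then f' x else F' x) x := by
  have key : ∀ y ∈ Set.Ioo 0 b,
      HasDerivAt (fun x => if x < b then f x else F x) (f' y) y := by
    intro y hy
    refine (hf y hy).congr_of_eventuallyEq ?_
    filter_upwards [Iio_mem_nhds hy.2] with z hz
    exact if_pos hz
  rcases lt_trichotomy x b with h | h | h
  · rw [if_pos h]; exact key x ⟨hx, h⟩
  · subst h
    simp only [lt_irrefl, if_false]
    have hG : (fun y => if y < x then f y else F y) =ᶠ[nhdsWithin x (Set.Iio x)] f := by
      filter_upwards [self_mem_nhdsWithin] with y hy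
      exact if_pos hy
    have hleft : HasDerivWithinAt (fun y => if y < x then f y else F y) (F' x) (Set.Iic x) x := by
      refine hasDerivWithinAt_Iic_of_tendsto_deriv (s := Set.Ioo 0 x) ?_ ?_ ?_ ?_
      · exact fun y hy => (key y hy).differentiableAt.differentiableWithinAt
      · have : Tendsto (fun y => if y < x then f y else F y) (nhdsWithin x (Set.Iio x))
          (nhds (F x)) := hl.congr' hG.symm
        unfold ContinuousWithinAt
        simp only [lt_irrefl, if_false]
        exact this.mono_left (nhdsWithin_mono _ (fun y hy => hy.2))
      · exact Ioo_mem_nhdsLT hx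
      · refine hl'.congr' ?_
        filter_upwards [Ioo_mem_nhdsLT hx] with y hy
        exact (key y hy).deriv.symm
    have hright : HasDerivWithinAt (fun y => if y < x then f y else F y) (F' x) (Set.Ici x) x := by
      refine (hF x ⟨by linarith, by linarith⟩).hasDerivWithinAt.congr ?_ ?_
      · intro y hy
        rw [if_neg (not_lt.2 hy)]
      · simp
    have := hleft.union hright
    rw [Set.Iic_union_Ici] at this
    exact hasDerivWithinAt_univ.1 this
  · rw [if_neg (not_lt.2 h.le)]
    refine (hF x ⟨by linarith, hxb⟩).congr_of_eventuallyEq ?_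
    filter_upwards [Ioi_mem_nhds h] with z hz
    rw [if_neg (not_lt.2 (le_of_lt hz))]

/-- Positivity: on `[0,c]`, if `g ≥ 0` on `(0,c)`. -/
lemma core_pos (g g' g'' g''' : ℝ → ℝ) (c : ℝ)
    (hg : ∀ x, 0 < x → x < c → HasDerivAt g (g' x) x)
    (hg' : ∀ x, 0 < x → x < c → HasDerivAt g' (g'' x) x)
    (hg'' : ∀ x, 0 < x → x < c → HasDerivAt g'' (g''' x) x)
    (hode : ∀ η, 0 < η → η < c →
      4 * g η - η ^ 4 * g η - 4 * η * g' η - 4 * η ^ 2 * g η * g' η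
        + 8 * η ^ 2 * g'' η + 4 * η ^ 3 * g''' η = 0)
    (h0 : g 0 = 0)
    (c0 : Tendsto g (nhdsWithin 0 (Set.Ioi 0)) (nhds (g 0)))
    (c1 : Tendsto g' (nhdsWithin 0 (Set.Ioi 0)) (nhds (g' 0)))
    (c2 : Tendsto g'' (nhdsWithin 0 (Set.Ioi 0)) (nhds (g'' 0)))
    (d0 : HasDerivWithinAt g (g' 0) (Set.Ioi 0) 0)
    (hpos : ∀ x, 0 < x → x < c → 0 ≤ g x) :
    (∀ x, 0 < x → x < c → g x ^ 2 / 2 ≤ x * g'' x + g' x - g x / x) ∧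
    (∀ x, 0 < x → x < c → 0 ≤ x * g' x - g x) := by
  have tid : Tendsto (fun x : ℝ => x) (nhdsWithin 0 (Set.Ioi 0)) (nhds 0) :=
    tendsto_id.mono_left nhdsWithin_le_nhds
  have tq : Tendsto (fun x => g x / x) (nhdsWithin 0 (Set.Ioi 0)) (nhds (g' 0)) := by
    have := (hasDerivWithinAt_iff_tendsto_slope' (by simp)).1 d0
    refine this.congr (fun x => ?_)
    simp [slope_def_field, h0]
  have hJlim : Tendsto (fun x => x * g'' x + g' x - g x / x - g x ^ 2 / 2)
      (nhdsWithin 0 (Set.Ioi 0)) (nhds 0) := by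
    have := (((tid.mul c2).add c1).sub tq).sub ((c0.pow 2).div_const 2)
    simpa [h0] using this
  have hJd : ∀ x, 0 < x → x < c →
      HasDerivAt (fun x => x * g'' x + g' x - g x / x - g x ^ 2 / 2) (x ^ 2 * g x / 4) x := by
    intro x hx hxc
    have h := ((((hasDerivAt_id x).mul (hg'' x hx hxc)).add (hg' x hx hxc)).sub
      ((hg x hx hxc).div (hasDerivAt_id x) hx.ne')).sub (((hg x hx hxc).pow 2).div_const 2)
    refine h.congr_deriv ?_
    have := hode x hx hxc
    simp only [id]
    field_simp
    ring_nf
    ring_nf at this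
    linarith
  have lim_le : ∀ (J : ℝ → ℝ), MonotoneOn J (Set.Ioo 0 c) →
      Tendsto J (nhdsWithin 0 (Set.Ioi 0)) (nhds 0) → ∀ x, 0 < x → x < c → 0 ≤ J x := by
    intro J hJ hl x hx hxc
    refine le_of_tendsto hl ?_
    filter_upwards [Ioo_mem_nhdsGT hx] with y hy
    exact hJ ⟨hy.1, hy.2.trans hxc⟩ ⟨hx, hxc⟩ hy.2.le
  have A : ∀ x, 0 < x → x < c → g x ^ 2 / 2 ≤ x * g'' x + g' x - g x / x := by
    intro x hx hxc
    have := lim_le _ (monotoneOn_of_hasDerivWithinAt_nonneg (convex_Ioo 0 c)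
      (fun y hy => (hJd y hy.1 hy.2).continuousAt.continuousWithinAt)
      (f' := fun x => x ^ 2 * g x / 4)
      (fun y hy => by
        rw [interior_Ioo] at hy ⊢; exact (hJd y hy.1 hy.2).hasDerivWithinAt)
      (fun y hy => by
        rw [interior_Ioo] at hy
        have := hpos y hy.1 hy.2
        positivity)) hJlim x hx hxc
    linarith
  refine ⟨A, fun x hx hxc => ?_⟩
  have hKd : ∀ x, 0 < x → x < c →
      HasDerivAt (fun x => x * (x * g' x - g x)) (x * (x * g'' x + g' x - g x / x)) x := by
    intro x hx hxc
    have h := (hasDerivAt_id x).mul (((hasDerivAt_id x).mul (hg' x hx hxc)).sub (hg x hx hxc))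
    refine h.congr_deriv ?_
    simp only [id]
    field_simp
    simp
    ring
  have hKlim : Tendsto (fun x => x * (x * g' x - g x)) (nhdsWithin 0 (Set.Ioi 0)) (nhds 0) := by
    have := tid.mul ((tid.mul c1).sub c0)
    simpa using this
  have := lim_le _ (monotoneOn_of_hasDerivWithinAt_nonneg (convex_Ioo 0 c)
      (fun y hy => (hKd y hy.1 hy.2).continuousAt.continuousWithinAt)
      (f' := fun x => (x * (x * g'' x + g' x - g x / x)))
      (fun y hy => by
        rw [interior_Ioo] at hy ⊢; exact (hKd y hy.1 hy.2).hasDerivWithinAt)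
      (fun y hy => by
        rw [interior_Ioo] at hy
        have := A y hy.1 hy.2
        exact mul_nonneg hy.1.le (le_trans (by positivity) this))) hKlim x hx hxc
  exact nonneg_of_mul_nonneg_right this hx

/-- Blow-up: no global solution. -/
lemma no_global (g g' g'' : ℝ → ℝ)
    (hg : ∀ x, 0 < x → HasDerivAt g (g' x) x)
    (hg' : ∀ x, 0 < x → HasDerivAt g' (g'' x) x)
    (hp : ∀ x, 0 < x → 0 < g x) (hp' : ∀ x, 0 < x → 0 < g' x)
    (hA : ∀ x, 0 < x → g x ^ 2 / 2 ≤ x * g'' x + g' x - g x / x)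
    (hK : ∀ x, 0 < x → 0 ≤ x * g' x - g x) : False := by
  -- linear growth
  have hgrow : ∀ x, 1 ≤ x → g 1 * x ≤ g x := by
    intro x hx
    have hm : MonotoneOn (fun x => g x / x) (Set.Ioi 0) := by
      have hd : ∀ y, 0 < y → HasDerivAt (fun x => g x / x) ((y * g' y - g y) / y ^ 2) y := by
        intro y hy
        refine ((hg y hy).div (hasDerivAt_id y) hy.ne').congr_deriv ?_
        simp only [id]; ring
      refine monotoneOn_of_hasDerivWithinAt_nonneg (convex_Ioi 0)
        (fun y hy => (hd y hy).continuousAt.continuousWithinAt)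
        (f' := fun y => (y * g' y - g y) / y ^ 2) ?_ ?_
      · intro y hy
        rw [interior_Ioi] at hy ⊢; exact (hd y hy).hasDerivWithinAt
      · intro y hy
        rw [interior_Ioi] at hy
        exact div_nonneg (hK y hy) (by positivity)
    have := hm (Set.mem_Ioi.2 one_pos) (Set.mem_Ioi.2 (by linarith)) hx
    simp only [div_one] at this
    rwa [le_div_iff₀ (by linarith)] at this
  -- energy
  have hen : ∀ x, 1 ≤ x → (1 * g' 1) ^ 2 - g 1 ^ 2 - g 1 ^ 3 / 3 ≤
      (x * g' x) ^ 2 - g x ^ 2 - g x ^ 3 / 3 := by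
    intro x hx
    have hd : ∀ y, 0 < y → HasDerivAt (fun x => (x * g' x) ^ 2 - g x ^ 2 - g x ^ 3 / 3)
        (2 * g' y * (y * (y * g'' y + g' y - g y / y) - g y ^ 2 / 2)) y := by
      intro y hy
      refine (((((hasDerivAt_id y).mul (hg' y hy)).pow 2).sub ((hg y hy).pow 2)).sub
        (((hg y hy).pow 3).div_const 3)).congr_deriv ?_
      simp only [id, Pi.mul_apply]
      field_simp
      simp
      ring
    have hm : MonotoneOn (fun x => (x * g' x) ^ 2 - g x ^ 2 - g x ^ 3 / 3) (Set.Ici 1) := by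
      refine monotoneOn_of_hasDerivWithinAt_nonneg (convex_Ici 1)
        (fun y hy => (hd y (lt_of_lt_of_le one_pos hy)).continuousAt.continuousWithinAt)
        (f' := fun y => 2 * g' y * (y * (y * g'' y + g' y - g y / y) - g y ^ 2 / 2)) ?_ ?_
      · intro y hy
        rw [interior_Ici] at hy ⊢; exact (hd y (one_pos.trans hy)).hasDerivWithinAt
      · intro y hy
        rw [interior_Ici] at hy
        have hy1 : (1 : ℝ) < y := hy
        have hy0 : 0 < y := by linarith
        have h1 := hA y hy0
        have h2 := hp' y hy0
        have h3 : 0 ≤ g y ^ 2 / 2 := by positivity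
        have : 0 ≤ y * (y * g'' y + g' y - g y / y) - g y ^ 2 / 2 := by nlinarith
        positivity
    exact hm (Set.mem_Ici.2 le_rfl) hx hx
  set C : ℝ := |(1 * g' 1) ^ 2 - g 1 ^ 2 - g 1 ^ 3 / 3| + 1 with hC
  have hC1 : 1 ≤ C := by rw [hC]; linarith [abs_nonneg ((1 * g' 1) ^ 2 - g 1 ^ 2 - g 1 ^ 3 / 3)]
  have hg1 := hp 1 one_pos
  set N : ℝ := C / g 1 + 1 with hN
  have hN1 : 1 ≤ N := by rw [hN]; have : 0 ≤ C / g 1 := by positivity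
                         linarith
  have hbig : ∀ x, N ≤ x → C ≤ g x := by
    intro x hx
    have h1 := hgrow x (by linarith)
    have : g 1 * N ≤ g 1 * x := by gcongr
    have h2 : g 1 * N = C + g 1 := by rw [hN]; field_simp
    linarith
  have hder : ∀ x, N ≤ x → Real.sqrt (g x) ^ 3 / 2 ≤ x * g' x := by
    intro x hx
    have hx0 : 0 < x := by linarith
    have h1 := hen x (by linarith)
    have h2 := hbig x hx
    have h3 : -C ≤ (1 * g' 1) ^ 2 - g 1 ^ 2 - g 1 ^ 3 / 3 := by
      rw [hC]; linarith [neg_abs_le ((1 * g' 1) ^ 2 - g 1 ^ 2 - g 1 ^ 3 / 3)]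
    have h4 := hp x hx0
    have h5 := Real.sq_sqrt h4.le
    have h6 := hp' x hx0
    refine (pow_le_pow_iff_left₀ (by positivity) (by positivity) two_ne_zero).1 ?_
    have h7 : (Real.sqrt (g x) ^ 3 / 2) ^ 2 = g x ^ 3 / 4 := by
      calc _ = (Real.sqrt (g x) ^ 2) ^ 3 / 4 := by ring
        _ = _ := by rw [h5]
    rw [h7]
    have h8 : C ≤ g x ^ 2 := by nlinarith
    have h9 : 0 ≤ g x ^ 3 := by positivity
    linarith
  -- y = 1/sqrt g
  have hd : ∀ y, N ≤ y → HasDerivAt (fun x => (Real.sqrt (g x))⁻¹ + Real.log x / 4)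
      (-(g' y / (2 * Real.sqrt (g y))) / Real.sqrt (g y) ^ 2 + y⁻¹ / 4) y := by
    intro y hy
    have hy0 : 0 < y := by linarith
    have h4 := hp y hy0
    exact (((hg y hy0).sqrt h4.ne').inv (Real.sqrt_pos.2 h4).ne').add
      ((Real.hasDerivAt_log hy0.ne').div_const 4)
  have hm : AntitoneOn (fun x => (Real.sqrt (g x))⁻¹ + Real.log x / 4) (Set.Ici N) := by
    refine antitoneOn_of_hasDerivWithinAt_nonpos (convex_Ici N)
      (fun y hy => (hd y hy).continuousAt.continuousWithinAt)
      (f' := fun y => -(g' y / (2 * Real.sqrt (g y))) / Real.sqrt (g y) ^ 2 + y⁻¹ / 4) ?_ ?_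
    · intro y hy
      rw [interior_Ici] at hy ⊢; exact (hd y (le_of_lt hy)).hasDerivWithinAt
    · intro y hy
      rw [interior_Ici] at hy
      have hyN : N < y := hy
      have hy0 : 0 < y := by linarith
      have h1 := hder y hyN.le
      have h2 := Real.sqrt_pos.2 (hp y hy0)
      have : y⁻¹ / 4 ≤ g' y / (2 * Real.sqrt (g y)) / Real.sqrt (g y) ^ 2 := by
        rw [div_div, le_div_iff₀ (by positivity), inv_eq_one_div, div_div, div_mul_eq_mul_div,
          div_le_iff₀ (by positivity)]
        nlinarith
      rw [neg_div]
      linarith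
  set y0 := (Real.sqrt (g N))⁻¹ + Real.log N / 4 with hy0
  have hX : N ≤ max N (Real.exp (4 * y0)) := le_max_left _ _
  have h := hm (Set.mem_Ici.2 le_rfl) (Set.mem_Ici.2 hX) hX
  simp only at h
  have hXp : 0 < max N (Real.exp (4 * y0)) := by linarith
  have h1 : 4 * y0 ≤ Real.log (max N (Real.exp (4 * y0))) :=
    (Real.le_log_iff_exp_le hXp).2 (le_max_right _ _)
  have h2 := inv_pos.2 (Real.sqrt_pos.2 (hp _ hXp))
  linarith

/-- Boundedness on a set. -/
def Bd (s : Set ℝ) (f : ℝ → ℝ) : Prop := ∃ C, ∀ x ∈ s, |f x| ≤ C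

lemma Bd.add {s : Set ℝ} {f h : ℝ → ℝ} (hf : Bd s f) (hh : Bd s h) : Bd s (fun x => f x + h x) := by
  obtain ⟨C, hC⟩ := hf
  obtain ⟨D, hD⟩ := hh
  exact ⟨C + D, fun x hx => (abs_add_le _ _).trans (add_le_add (hC x hx) (hD x hx))⟩

lemma Bd.sub {s : Set ℝ} {f h : ℝ → ℝ} (hf : Bd s f) (hh : Bd s h) : Bd s (fun x => f x - h x) := by
  obtain ⟨C, hC⟩ := hf
  obtain ⟨D, hD⟩ := hh
  exact ⟨C + D, fun x hx => (abs_sub _ _).trans (add_le_add (hC x hx) (hD x hx))⟩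

lemma Bd.mul {s : Set ℝ} {f h : ℝ → ℝ} (hf : Bd s f) (hh : Bd s h) : Bd s (fun x => f x * h x) := by
  obtain ⟨C, hC⟩ := hf
  obtain ⟨D, hD⟩ := hh
  refine ⟨C * D, fun x hx => ?_⟩
  rw [abs_mul]
  exact mul_le_mul (hC x hx) (hD x hx) (abs_nonneg _) ((abs_nonneg _).trans (hC x hx))

lemma Bd.const (s : Set ℝ) (c : ℝ) : Bd s (fun _ => c) := ⟨|c|, fun _ _ => le_rfl⟩

lemma Bd.congr {s : Set ℝ} {f h : ℝ → ℝ} (hf : Bd s f) (hh : ∀ x ∈ s, h x = f x) : Bd s h := by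
  obtain ⟨C, hC⟩ := hf
  exact ⟨C, fun x hx => by rw [hh x hx]; exact hC x hx⟩

lemma Bd.of_deriv {a b : ℝ} (hab : a < b) {f f' : ℝ → ℝ}
    (hf : ∀ x ∈ Set.Ioo a b, HasDerivAt f (f' x) x) (h : Bd (Set.Ioo a b) f') :
    Bd (Set.Ioo a b) f := by
  obtain ⟨C, hC⟩ := h
  have hm : (a + b) / 2 ∈ Set.Ioo a b := ⟨by linarith, by linarith⟩
  have hC0 : 0 ≤ C := (abs_nonneg _).trans (hC _ hm)
  refine ⟨|f ((a + b) / 2)| + C * (b - a), fun x hx => ?_⟩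
  have := (convex_Ioo a b).norm_image_sub_le_of_norm_hasDerivWithin_le
    (fun x hx => (hf x hx).hasDerivWithinAt) hC hm hx
  simp only [Real.norm_eq_abs] at this
  have h2 : |x - (a + b) / 2| ≤ b - a := by
    rw [abs_le]; constructor <;> linarith [hx.1, hx.2]
  have h3 : C * |x - (a + b) / 2| ≤ C * (b - a) := by gcongr
  have h4 := abs_add_le (f x - f ((a + b) / 2)) (f ((a + b) / 2))
  rw [sub_add_cancel] at h4
  linarith

lemma bounds (g g' g'' g''' : ℝ → ℝ) (b : ℝ) (hb : 0 < b)
    (hg : ∀ x ∈ Set.Ioo (b / 2) b, HasDerivAt g (g' x) x)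
    (hg' : ∀ x ∈ Set.Ioo (b / 2) b, HasDerivAt g' (g'' x) x)
    (hg'' : ∀ x ∈ Set.Ioo (b / 2) b, HasDerivAt g'' (g''' x) x)
    (hode : ∀ x ∈ Set.Ioo (b / 2) b, g''' x = odeR x (g x) (g' x) (g'' x))
    (hbd : Bd (Set.Ioo (b / 2) b) g) :
    Bd (Set.Ioo (b / 2) b) g' ∧ Bd (Set.Ioo (b / 2) b) g'' ∧ Bd (Set.Ioo (b / 2) b) g''' := by
  set s := Set.Ioo (b / 2) b with hs
  have hp : ∀ x ∈ s, 0 < x := fun x hx => by linarith [hx.1]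
  have bx : Bd s (fun x => x) := ⟨b, fun x hx => by
    rw [abs_of_pos (hp x hx)]; exact hx.2.le⟩
  have bi : Bd s (fun x => x⁻¹) := ⟨(b / 2)⁻¹, fun x hx => by
    rw [abs_of_pos (inv_pos.2 (hp x hx))]
    exact inv_anti₀ (by positivity) hx.1.le⟩
  have hJd : ∀ x ∈ s,
      HasDerivAt (fun x => x * g'' x + g' x - g x / x - g x ^ 2 / 2) (x ^ 2 * g x / 4) x := by
    intro x hx
    have hx0 := hp x hx
    have h := ((((hasDerivAt_id x).mul (hg'' x hx)).add (hg' x hx)).sub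
      ((hg x hx).div (hasDerivAt_id x) hx0.ne')).sub (((hg x hx).pow 2).div_const 2)
    refine h.congr_deriv ?_
    rw [hode x hx]
    simp only [id, odeR]
    field_simp
    ring_nf
  have bJ := Bd.of_deriv (by linarith) hJd
    (((bx.mul bx).mul (hbd.mul (Bd.const s (1 / 4)))).congr (fun x _ => by ring))
  have bh : Bd s (fun x => x * g'' x + g' x - g x / x) :=
    (bJ.add (hbd.mul (hbd.mul (Bd.const s (1 / 2))))).congr (fun x _ => by ring)
  have hKd : ∀ x ∈ s,
      HasDerivAt (fun x => x * (x * g' x - g x)) (x * (x * g'' x + g' x - g x / x)) x := by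
    intro x hx
    have hx0 := hp x hx
    have h := (hasDerivAt_id x).mul (((hasDerivAt_id x).mul (hg' x hx)).sub (hg x hx))
    refine h.congr_deriv ?_
    simp only [id]
    field_simp
    simp
    ring
  have bK := Bd.of_deriv (by linarith) hKd (bx.mul bh)
  have b1 : Bd s g' := (((bK.mul bi).add hbd).mul bi).congr (fun x hx => by
    have := hp x hx
    field_simp
    ring)
  have b2 : Bd s g'' := (((bh.sub b1).add (hbd.mul bi)).mul bi).congr (fun x hx => by
    have := hp x hx
    field_simp
    ring)
  refine ⟨b1, b2, ?_⟩
  have bx2 := bx.mul bx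
  have bi3 := bi.mul (bi.mul bi)
  have := (((((bx2.mul bx2).mul hbd).add ((Bd.const s 4).mul (bx.mul b1))).add
    ((Bd.const s 4).mul (bx2.mul (hbd.mul b1)))).sub
    (((Bd.const s 4).mul hbd).add ((Bd.const s 8).mul (bx2.mul b2)))).mul
    ((Bd.const s (1 / 4)).mul bi3)
  refine this.congr (fun x hx => ?_)
  have := hp x hx
  rw [hode x hx, odeR]
  field_simp
  ring

/-- Proposition 3.1: Let `η̄ ∈ (0, ∞]` and let `g : [0, η̄) → ℝ` be a `C³`
solution of the ODE with `g(0) = 0`, `g''(0) = 0`, `g'(0) > 0`, which cannot be extended to a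
`C³` solution of the same ODE on any strictly larger interval `[0, η̄')` with `η̄' > η̄`.
Then `η̄ < ∞`, `g'(η) > 0` on `(0, η̄)`, and `g(η) → +∞` as `η → η̄⁻`. -/
theorem stmt6 (ηbar : EReal) (hηbar : 0 < ηbar)
    (g g' g'' g''' : ℝ → ℝ)
    (hg : ∀ η ∈ {x : ℝ | 0 ≤ x ∧ (x : EReal) < ηbar},
      HasDerivWithinAt g (g' η) {x : ℝ | 0 ≤ x ∧ (x : EReal) < ηbar} η)
    (hg' : ∀ η ∈ {x : ℝ | 0 ≤ x ∧ (x : EReal) < ηbar},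
      HasDerivWithinAt g' (g'' η) {x : ℝ | 0 ≤ x ∧ (x : EReal) < ηbar} η)
    (hg'' : ∀ η ∈ {x : ℝ | 0 ≤ x ∧ (x : EReal) < ηbar},
      HasDerivWithinAt g'' (g''' η) {x : ℝ | 0 ≤ x ∧ (x : EReal) < ηbar} η)
    (hg''' : ContinuousOn g''' {x : ℝ | 0 ≤ x ∧ (x : EReal) < ηbar})
    (hode : ∀ η ∈ {x : ℝ | 0 ≤ x ∧ (x : EReal) < ηbar},
      4 * g η - η ^ 4 * g η - 4 * η * g' η - 4 * η ^ 2 * g η * g' η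
        + 8 * η ^ 2 * g'' η + 4 * η ^ 3 * g''' η = 0)
    (h0 : g 0 = 0) (h2 : g'' 0 = 0) (h1 : 0 < g' 0)
    (hmax : ¬ ∃ (ηbar' : EReal) (G G' G'' G''' : ℝ → ℝ), ηbar < ηbar' ∧
      (∀ η ∈ {x : ℝ | 0 ≤ x ∧ (x : EReal) < ηbar'},
        HasDerivWithinAt G (G' η) {x : ℝ | 0 ≤ x ∧ (x : EReal) < ηbar'} η) ∧
      (∀ η ∈ {x : ℝ | 0 ≤ x ∧ (x : EReal) < ηbar'},
        HasDerivWithinAt G' (G'' η) {x : ℝ | 0 ≤ x ∧ (x : EReal) < ηbar'} η) ∧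
      (∀ η ∈ {x : ℝ | 0 ≤ x ∧ (x : EReal) < ηbar'},
        HasDerivWithinAt G'' (G''' η) {x : ℝ | 0 ≤ x ∧ (x : EReal) < ηbar'} η) ∧
      ContinuousOn G''' {x : ℝ | 0 ≤ x ∧ (x : EReal) < ηbar'} ∧
      (∀ η ∈ {x : ℝ | 0 ≤ x ∧ (x : EReal) < ηbar'},
        4 * G η - η ^ 4 * G η - 4 * η * G' η - 4 * η ^ 2 * G η * G' η
          + 8 * η ^ 2 * G'' η + 4 * η ^ 3 * G''' η = 0) ∧
      Set.EqOn G g {x : ℝ | 0 ≤ x ∧ (x : EReal) < ηbar}) :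
    ∃ b : ℝ, ηbar = (b : EReal) ∧ (∀ η : ℝ, 0 < η → η < b → 0 < g' η) ∧
      Tendsto g (nhdsWithin b (Set.Iio b)) atTop := by
  set S : Set ℝ := {x : ℝ | 0 ≤ x ∧ (x : EReal) < ηbar} with hS
  have hopen : ∀ x ∈ S, ∃ y, x < y ∧ y ∈ S := by
    intro x hx
    obtain ⟨q, hq1, hq2⟩ := EReal.lt_iff_exists_real_btwn.1 hx.2
    have hxq : x < q := EReal.coe_lt_coe_iff.1 hq1
    exact ⟨q, hxq, hx.1.trans hxq.le, hq2⟩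
  have hdown : ∀ x ∈ S, ∀ y, 0 ≤ y → y ≤ x → y ∈ S := fun x hx y hy hyx =>
    ⟨hy, lt_of_le_of_lt (EReal.coe_le_coe_iff.2 hyx) hx.2⟩
  have h0S : (0 : ℝ) ∈ S := ⟨le_rfl, by simpa using hηbar⟩
  have hnhds : ∀ x ∈ S, 0 < x → S ∈ nhds x := by
    intro x hx hx0
    obtain ⟨y, hxy, hy⟩ := hopen x hx
    exact mem_of_superset (Ioo_mem_nhds hx0 hxy) (fun z hz => hdown y hy z hz.1.le hz.2.le)
  have hnhds0 : S ∈ nhdsWithin (0 : ℝ) (Set.Ioi 0) := by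
    obtain ⟨y, hxy, hy⟩ := hopen 0 h0S
    exact mem_of_superset (Ioo_mem_nhdsGT hxy) (fun z hz => hdown y hy z hz.1.le hz.2.le)
  have D0 : ∀ x ∈ S, 0 < x → HasDerivAt g (g' x) x := fun x hx h =>
    (hg x hx).hasDerivAt (hnhds x hx h)
  have D1 : ∀ x ∈ S, 0 < x → HasDerivAt g' (g'' x) x := fun x hx h =>
    (hg' x hx).hasDerivAt (hnhds x hx h)
  have D2 : ∀ x ∈ S, 0 < x → HasDerivAt g'' (g''' x) x := fun x hx h =>
    (hg'' x hx).hasDerivAt (hnhds x hx h)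
  have hle0 : nhdsWithin (0 : ℝ) (Set.Ioi 0) ≤ nhdsWithin 0 S :=
    nhdsWithin_le_of_mem hnhds0
  have c0 : Tendsto g (nhdsWithin 0 (Set.Ioi 0)) (nhds (g 0)) :=
    (hg 0 h0S).continuousWithinAt.tendsto.mono_left hle0
  have c1 : Tendsto g' (nhdsWithin 0 (Set.Ioi 0)) (nhds (g' 0)) :=
    (hg' 0 h0S).continuousWithinAt.tendsto.mono_left hle0
  have c2 : Tendsto g'' (nhdsWithin 0 (Set.Ioi 0)) (nhds (g'' 0)) :=
    (hg'' 0 h0S).continuousWithinAt.tendsto.mono_left hle0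
  have d0 : HasDerivWithinAt g (g' 0) (Set.Ioi 0) 0 := (hg 0 h0S).mono_of_mem_nhdsWithin hnhds0
  have core : ∀ c ∈ S, (∀ x, 0 < x → x < c → 0 ≤ g x) →
      (∀ x, 0 < x → x < c → g x ^ 2 / 2 ≤ x * g'' x + g' x - g x / x) ∧
      (∀ x, 0 < x → x < c → 0 ≤ x * g' x - g x) := by
    intro c hc hpos
    have hin : ∀ x, 0 < x → x < c → x ∈ S := fun x h h' => hdown c hc x h.le h'.le
    exact core_pos g g' g'' g''' c (fun x h h' => D0 x (hin x h h') h)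
      (fun x h h' => D1 x (hin x h h') h) (fun x h h' => D2 x (hin x h h') h)
      (fun x h h' => hode x (hin x h h')) h0 c0 c1 c2 d0 hpos
  -- if g' > 0 on [0,c) then g > 0 on (0,c]
  have gpos : ∀ c ∈ S, (∀ x, 0 ≤ x → x < c → 0 < g' x) → ∀ x, 0 < x → x ≤ c → 0 < g x := by
    intro c hc hpos x hx hxc
    have hxS := hdown c hc x hx.le hxc
    have hm : StrictMonoOn g (Set.Icc 0 x) := by
      refine strictMonoOn_of_deriv_pos (convex_Icc 0 x) ?_ ?_
      · exact fun y hy => ((hg y (hdown x hxS y hy.1 hy.2)).continuousWithinAt).mono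
          (fun z hz => hdown x hxS z hz.1 hz.2)
      · intro y hy
        rw [interior_Icc] at hy
        rw [(D0 y (hdown x hxS y hy.1.le hy.2.le) hy.1).deriv]
        exact hpos y hy.1.le (by linarith [hy.2])
    have := hm ⟨le_rfl, hx.le⟩ ⟨hx.le, le_rfl⟩ hx
    rwa [h0] at this
  have g'pos : ∀ x ∈ S, 0 < g' x := by
    by_contra hcon
    push Not at hcon
    obtain ⟨x1, hx1, hx1'⟩ := hcon
    have hsub : Set.Icc 0 x1 ⊆ S := fun z hz => hdown x1 hx1 z hz.1 hz.2
    have hcont : ContinuousOn g' (Set.Icc 0 x1) := fun y hy =>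
      ((hg' y (hsub hy)).continuousWithinAt).mono hsub
    have hcomp : IsCompact (Set.Icc 0 x1 ∩ g' ⁻¹' Set.Iic 0) :=
      isCompact_Icc.of_isClosed_subset (hcont.preimage_isClosed_of_isClosed isClosed_Icc isClosed_Iic)
        Set.inter_subset_left
    obtain ⟨c, hc⟩ := hcomp.exists_isLeast ⟨x1, ⟨hx1.1, le_rfl⟩, hx1'⟩
    have hcI : c ∈ Set.Icc 0 x1 := hc.1.1
    have hc' : g' c ≤ 0 := hc.1.2
    have hcS := hsub hcI
    have hlt : ∀ x, 0 ≤ x → x < c → 0 < g' x := by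
      intro x hx hxc
      by_contra hn
      have := hc.2 ⟨⟨hx, hxc.le.trans hcI.2⟩, not_lt.1 hn⟩
      linarith
    have hc0 : 0 < c := by
      rcases hcI.1.eq_or_lt with h | h
      · rw [← h] at hc'; linarith
      · exact h
    have hgp := gpos c hcS hlt
    have hk := (core c hcS (fun x hx hxc => (hgp x hx hxc.le).le)).2
    have hlim : Tendsto (fun x => x * g' x - g x) (nhdsWithin c (Set.Iio c))
        (nhds (c * g' c - g c)) :=
      (((continuousAt_id.mul (D1 c hcS hc0).continuousAt).sub
        (D0 c hcS hc0).continuousAt).tendsto).mono_left nhdsWithin_le_nhds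
    have : 0 ≤ c * g' c - g c := by
      refine ge_of_tendsto hlim ?_
      filter_upwards [Ioo_mem_nhdsLT hc0] with x hx
      exact hk x hx.1 hx.2
    have h3 := hgp c hc0 le_rfl
    nlinarith
  have gp : ∀ x ∈ S, 0 < x → 0 < g x := fun x hx h =>
    gpos x hx (fun y hy hyx => g'pos y (hdown x hx y hy hyx.le)) x h le_rfl
  have full : ∀ x ∈ S, 0 < x → g x ^ 2 / 2 ≤ x * g'' x + g' x - g x / x ∧
      0 ≤ x * g' x - g x := by
    intro x hx hx0
    obtain ⟨c, hxc, hc⟩ := hopen x hx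
    have := core c hc (fun y hy hyc => (gp y (hdown c hc y hy.le hyc.le) hy).le)
    exact ⟨this.1 x hx0 hxc, this.2 x hx0 hxc⟩
  induction ηbar using EReal.rec with
  | bot => exact absurd hηbar (by simp)
  | top =>
    exfalso
    have hin : ∀ x : ℝ, 0 < x → x ∈ S := fun x hx => ⟨hx.le, EReal.coe_lt_top x⟩
    exact no_global g g' g'' (fun x h => D0 x (hin x h) h) (fun x h => D1 x (hin x h) h)
      (fun x h => gp x (hin x h) h) (fun x h => g'pos x (hin x h))
      (fun x h => (full x (hin x h) h).1) (fun x h => (full x (hin x h) h).2)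
  | coe b =>
    have hb : 0 < b := by exact_mod_cast hηbar
    have hin : ∀ x : ℝ, 0 ≤ x → x < b → x ∈ S := fun x hx h => ⟨hx, EReal.coe_lt_coe_iff.2 h⟩
    have hSb : ∀ x ∈ S, x < b := fun x hx => EReal.coe_lt_coe_iff.1 hx.2
    refine ⟨b, rfl, fun x hx hxb => g'pos x (hin x hx.le hxb), ?_⟩
    have hmono : ∀ x y, 0 < x → x ≤ y → y < b → g x ≤ g y := by
      intro x y hx hxy hy
      have hm : MonotoneOn g (Set.Ioo 0 b) := by
        refine monotoneOn_of_hasDerivWithinAt_nonneg (convex_Ioo 0 b) (f' := g')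
          (fun y hy => (D0 y (hin y hy.1.le hy.2) hy.1).continuousAt.continuousWithinAt) ?_ ?_
        · intro y hy
          rw [interior_Ioo] at hy
          exact (D0 y (hin y hy.1.le hy.2) hy.1).hasDerivWithinAt
        · intro y hy
          rw [interior_Ioo] at hy
          exact (g'pos y (hin y hy.1.le hy.2)).le
      exact hm ⟨hx, by linarith⟩ ⟨by linarith, hy⟩ hxy
    by_contra hnt
    have hbdd : ∃ M, ∀ x, 0 < x → x < b → g x ≤ M := by
      by_contra hcon
      push Not at hcon
      apply hnt
      rw [tendsto_atTop]
      intro M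
      obtain ⟨x, hx, hxb, hxM⟩ := hcon M
      filter_upwards [Ioo_mem_nhdsLT hxb] with y hy
      exact hxM.le.trans (hmono x y hx hy.1.le hy.2)
    obtain ⟨M, hM⟩ := hbdd
    have hR : ∀ x ∈ S, 0 < x → g''' x = odeR x (g x) (g' x) (g'' x) := by
      intro x hx hx0
      have := hode x hx
      rw [odeR, eq_div_iff (by positivity)]
      linarith
    have hI : ∀ x ∈ Set.Ioo (b / 2) b, x ∈ S ∧ 0 < x := fun x hx =>
      have : 0 < x := by linarith [hx.1]
      ⟨hin x this.le hx.2, this⟩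
    have hbg : Bd (Set.Ioo (b / 2) b) g := ⟨M, fun x hx => by
      rw [abs_of_pos (gp x (hI x hx).1 (hI x hx).2)]; exact hM x (hI x hx).2 hx.2⟩
    have E0 : ∀ x ∈ Set.Ioo (b / 2) b, HasDerivAt g (g' x) x := fun x hx =>
      D0 x (hI x hx).1 (hI x hx).2
    have E1 : ∀ x ∈ Set.Ioo (b / 2) b, HasDerivAt g' (g'' x) x := fun x hx =>
      D1 x (hI x hx).1 (hI x hx).2
    have E2 : ∀ x ∈ Set.Ioo (b / 2) b, HasDerivAt g'' (g''' x) x := fun x hx =>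
      D2 x (hI x hx).1 (hI x hx).2
    obtain ⟨⟨C1, hC1⟩, ⟨C2, hC2⟩, ⟨C3, hC3⟩⟩ := bounds g g' g'' g''' b hb E0 E1 E2
      (fun x hx => hR x (hI x hx).1 (hI x hx).2) hbg
    obtain ⟨p, hp⟩ := lim_of_bdd_deriv g g' (b / 2) b C1 (by linarith) E0 hC1
    obtain ⟨q, hq⟩ := lim_of_bdd_deriv g' g'' (b / 2) b C2 (by linarith) E1 hC2
    obtain ⟨r, hr⟩ := lim_of_bdd_deriv g'' g''' (b / 2) b C3 (by linarith) E2 hC3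
    have hl3 : Tendsto g''' (nhdsWithin b (Set.Iio b)) (nhds (odeR b p q r)) := by
      have tid : Tendsto (fun x : ℝ => x) (nhdsWithin b (Set.Iio b)) (nhds b) :=
        tendsto_id.mono_left nhdsWithin_le_nhds
      have : Tendsto (fun x => odeR x (g x) (g' x) (g'' x)) (nhdsWithin b (Set.Iio b))
          (nhds (odeR b p q r)) := by
        unfold odeR
        refine Tendsto.div ?_ ((tid.pow 3).const_mul 4) (by positivity)
        exact (((((tid.pow 4).mul hp).add ((tid.const_mul 4).mul hq)).add
          ((((tid.pow 2).const_mul 4).mul hp).mul hq)).sub (hp.const_mul 4)).sub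
          (((tid.pow 2).const_mul 8).mul hr)
      refine this.congr' ?_
      filter_upwards [Ioo_mem_nhdsLT hb] with x hx
      exact (hR x (hin x hx.1.le hx.2) hx.1).symm
    obtain ⟨ε, hε, F, F', F'', hF0, hF1, hF2, hF⟩ := ode_local b p q r hb
    set F3 : ℝ → ℝ := fun t => odeR t (F t) (F' t) (F'' t) with hF3
    have hF3b : F3 b = odeR b p q r := by simp only [hF3, hF0, hF1, hF2]
    have P0 := glue g g' F F' b ε hb hε (fun x hx => D0 x (hin x hx.1.le hx.2) hx.1)
      (fun t ht => (hF t ht).1) (by rwa [hF0]) (by rwa [hF1])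
    have P1 := glue g' g'' F' F'' b ε hb hε (fun x hx => D1 x (hin x hx.1.le hx.2) hx.1)
      (fun t ht => (hF t ht).2.1) (by rwa [hF1]) (by rwa [hF2])
    have P2 := glue g'' g''' F'' F3 b ε hb hε (fun x hx => D2 x (hin x hx.1.le hx.2) hx.1)
      (fun t ht => (hF t ht).2.2) (by rwa [hF2]) (by rwa [hF3b])
    -- derivative at 0
    have at0 : ∀ (f f' H : ℝ → ℝ) (T : Set ℝ), (∀ x ∈ T, 0 ≤ x) →
        HasDerivWithinAt f (f' 0) S 0 →
        HasDerivWithinAt (fun x => if x < b then f x else H x) (f' 0) T 0 := by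
      intro f f' H T hT hf
      have h1 : HasDerivWithinAt f (f' 0) T 0 := by
        refine hf.mono_of_mem_nhdsWithin ?_
        rw [mem_nhdsWithin]
        exact ⟨Set.Iio b, isOpen_Iio, hb, fun x hx => hin x (hT x hx.2) hx.1⟩
      refine h1.congr_of_eventuallyEq ?_ (if_pos hb)
      filter_upwards [mem_nhdsWithin_of_mem_nhds (Iio_mem_nhds hb)] with x hx
      exact if_pos hx
    have hlt' : ∀ x : ℝ, (x : EReal) < ((b + ε : ℝ) : EReal) → x < b + ε := fun x hx =>
      EReal.coe_lt_coe_iff.1 hx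
    apply hmax
    refine ⟨((b + ε : ℝ) : EReal), fun x => if x < b then g x else F x,
      fun x => if x < b then g' x else F' x, fun x => if x < b then g'' x else F'' x,
      fun x => if x < b then g''' x else F3 x, ?_, ?_, ?_, ?_, ?_, ?_, ?_⟩
    · exact EReal.coe_lt_coe_iff.2 (by linarith)
    · intro x hx
      rcases hx.1.eq_or_lt with h | h
      · rw [← h]; simp only [if_pos hb]
        exact at0 g g' F _ (fun x hx => hx.1) (hg 0 h0S)
      · exact (P0 x h (hlt' x hx.2)).hasDerivWithinAt
    · intro x hx
      rcases hx.1.eq_or_lt with h | h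
      · rw [← h]; simp only [if_pos hb]
        exact at0 g' g'' F' _ (fun x hx => hx.1) (hg' 0 h0S)
      · exact (P1 x h (hlt' x hx.2)).hasDerivWithinAt
    · intro x hx
      rcases hx.1.eq_or_lt with h | h
      · rw [← h]; simp only [if_pos hb]
        exact at0 g'' g''' F'' _ (fun x hx => hx.1) (hg'' 0 h0S)
      · exact (P2 x h (hlt' x hx.2)).hasDerivWithinAt
    · intro x hx
      rcases lt_or_ge x b with hxb | hxb
      · have h1 : ContinuousWithinAt g''' {x : ℝ | 0 ≤ x ∧ (x : EReal) < ((b + ε : ℝ) : EReal)} x := by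
          refine (hg''' x (hin x hx.1 hxb)).mono_of_mem_nhdsWithin ?_
          rw [mem_nhdsWithin]
          exact ⟨Set.Iio b, isOpen_Iio, hxb, fun y hy => hin y hy.2.1 hy.1⟩
        refine h1.congr_of_eventuallyEq ?_ (if_pos hxb)
        filter_upwards [mem_nhdsWithin_of_mem_nhds (Iio_mem_nhds hxb)] with y hy
        exact if_pos hy
      · have hx0 : 0 < x := by linarith
        have k0 := (P0 x hx0 (hlt' x hx.2)).continuousAt
        have k1 := (P1 x hx0 (hlt' x hx.2)).continuousAt
        have k2 := (P2 x hx0 (hlt' x hx.2)).continuousAt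
        have kk : ContinuousAt (fun x => odeR x (if x < b then g x else F x)
            (if x < b then g' x else F' x) (if x < b then g'' x else F'' x)) x := by
          unfold odeR
          refine ContinuousAt.div ?_ (by fun_prop) (by positivity)
          have kid : ContinuousAt (fun x : ℝ => x) x := continuousAt_id
          exact (((((kid.pow 4).mul k0).add ((kid.const_mul 4).mul k1)).add
            ((((kid.pow 2).const_mul 4).mul k0).mul k1)).sub (k0.const_mul 4)).sub
            (((kid.pow 2).const_mul 8).mul k2)
        refine (kk.congr ?_).continuousWithinAt
        filter_upwards [Ioi_mem_nhds hx0] with y hy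
        by_cases hyb : y < b
        · simp only [if_pos hyb]
          exact (hR y (hin y (le_of_lt hy) hyb) hy).symm
        · simp only [if_neg hyb, hF3]
    · intro x hx
      by_cases hxb : x < b
      · simp only [if_pos hxb]
        exact hode x (hin x hx.1 hxb)
      · simp only [if_neg hxb, hF3, odeR]
        have hx0 : 0 < x := by linarith
        field_simp
        ring
    · intro x hx
      exact if_pos (hSb x hx)
end

section
/- Let a, γ ∈ ℝ and let h : [a, ∞) → ℝ be three times continuously differentiable with h'(r) > 0 for all r ≥ a and h''(r) − h'(r) − h(r) ≥ h(r)² + γ for all r ≥ a. Then for all r ≥ a, (1/2)h'(r)² ≥ (1/2)h(r)² + (1/3)h(r)³ + γh(r) + δ, where δ = (1/2)h'(a)² − (1/2)h(a)² − (1/3)h(a)³ − γh(a). -/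
/-- If `h : [a, ∞) → ℝ` is `C³` with `h' > 0` and
`h'' − h' − h ≥ h² + γ` on `[a, ∞)`, then for all `r ≥ a`,
`(1/2)h'(r)² ≥ (1/2)h(r)² + (1/3)h(r)³ + γh(r) + δ` where
`δ = (1/2)h'(a)² − (1/2)h(a)² − (1/3)h(a)³ − γh(a)`. -/
theorem stmt10 (a γ : ℝ) (h h' h'' h''' : ℝ → ℝ)
    (hh : ∀ r ∈ Set.Ici a, HasDerivWithinAt h (h' r) (Set.Ici a) r)
    (hh' : ∀ r ∈ Set.Ici a, HasDerivWithinAt h' (h'' r) (Set.Ici a) r)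
    (hh'' : ∀ r ∈ Set.Ici a, HasDerivWithinAt h'' (h''' r) (Set.Ici a) r)
    (hh''' : ContinuousOn h''' (Set.Ici a))
    (hpos : ∀ r ∈ Set.Ici a, 0 < h' r)
    (hineq : ∀ r ∈ Set.Ici a, h r ^ 2 + γ ≤ h'' r - h' r - h r) :
    ∀ r ∈ Set.Ici a,
      (1 / 2) * h r ^ 2 + (1 / 3) * h r ^ 3 + γ * h r
          + ((1 / 2) * h' a ^ 2 - (1 / 2) * h a ^ 2 - (1 / 3) * h a ^ 3 - γ * h a)
        ≤ (1 / 2) * h' r ^ 2 := by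
  have hd : ∀ x ∈ Set.Ici a, HasDerivWithinAt
      (fun r => (1 / 2) * h' r ^ 2 - (1 / 2) * h r ^ 2 - (1 / 3) * h r ^ 3 - γ * h r)
      (h' x * (h'' x - h x - h x ^ 2 - γ)) (Set.Ici a) x := by
    intro x hx
    have h1 := hh x hx
    have h2 := hh' x hx
    have := ((((h2.pow 2).const_mul (1 / 2)).sub ((h1.pow 2).const_mul (1 / 2))).sub
      ((h1.pow 3).const_mul (1 / 3))).sub (h1.const_mul γ)
    refine this.congr_deriv ?_
    norm_num
    ring
  have hm : MonotoneOn
      (fun r => (1 / 2) * h' r ^ 2 - (1 / 2) * h r ^ 2 - (1 / 3) * h r ^ 3 - γ * h r)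
      (Set.Ici a) := by
    refine monotoneOn_of_hasDerivWithinAt_nonneg (convex_Ici a)
      (fun x hx => (hd x hx).continuousWithinAt)
      (fun x hx => (hd x (interior_subset hx)).mono interior_subset) ?_
    intro x hx
    have hx' := interior_subset hx
    have h1 := hpos x hx'
    have h2 := hineq x hx'
    exact mul_nonneg h1.le (by linarith)
  intro r hr
  have := hm (Set.mem_Ici.2 le_rfl) hr hr
  simp only at this
  linarith
end

section
/- Let ε > 0 and let g : [0, ε) → ℝ be three times continuously differentiable, satisfy the ODE 4g(η) − η⁴g(η) − 4ηg'(η) − 4η²g(η)g'(η) + 8η²g''(η) + 4η³g'''(η) = 0 on [0, ε), with g(0) = 0 and g''(0) = 0. Then g'''(0) = (3/8)·g'(0)². -/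
/-- Let `ε > 0` and let `g : [0, ε) → ℝ` be a `C³` solution of the ODE on
`[0, ε)` with `g(0) = 0` and `g''(0) = 0`. Then `g'''(0) = (3/8)·g'(0)²`. -/
theorem stmt13 (ε : ℝ) (hε : 0 < ε)
    (g g' g'' g''' : ℝ → ℝ)
    (hg : ∀ η ∈ Set.Ico 0 ε, HasDerivWithinAt g (g' η) (Set.Ico 0 ε) η)
    (hg' : ∀ η ∈ Set.Ico 0 ε, HasDerivWithinAt g' (g'' η) (Set.Ico 0 ε) η)
    (hg'' : ∀ η ∈ Set.Ico 0 ε, HasDerivWithinAt g'' (g''' η) (Set.Ico 0 ε) η)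
    (hg''' : ContinuousOn g''' (Set.Ico 0 ε))
    (hode : ∀ η ∈ Set.Ico 0 ε,
      4 * g η - η ^ 4 * g η - 4 * η * g' η - 4 * η ^ 2 * g η * g' η
        + 8 * η ^ 2 * g'' η + 4 * η ^ 3 * g''' η = 0)
    (h0 : g 0 = 0) (h2 : g'' 0 = 0) :
    g''' 0 = (3 / 8) * g' 0 ^ 2 := by
  have hm : (0:ℝ) ∈ Set.Ico 0 ε := ⟨le_refl _, hε⟩
  have hle : nhdsWithin (0:ℝ) (Set.Ioi 0) ≤ nhdsWithin 0 (Set.Ico 0 ε) := by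
    rw [← nhdsWithin_Ioo_eq_nhdsGT hε]
    exact nhdsWithin_mono _ Set.Ioo_subset_Ico_self
  have hdiff : Set.Ico 0 ε \ {(0:ℝ)} = Set.Ioo 0 ε := by simp
  have tid : Filter.Tendsto (fun x : ℝ => x) (nhdsWithin 0 (Set.Ioi 0)) (nhds 0) :=
    tendsto_nhdsWithin_of_tendsto_nhds Filter.tendsto_id
  have tg : Filter.Tendsto g (nhdsWithin 0 (Set.Ioi 0)) (nhds 0) := by
    have := (hg 0 hm).continuousWithinAt.tendsto.mono_left hle
    rwa [h0] at this
  have tg' : Filter.Tendsto g' (nhdsWithin 0 (Set.Ioi 0)) (nhds (g' 0)) :=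
    (hg' 0 hm).continuousWithinAt.tendsto.mono_left hle
  have tg3 : Filter.Tendsto g''' (nhdsWithin 0 (Set.Ioi 0)) (nhds (g''' 0)) :=
    (hg''' 0 hm).tendsto.mono_left hle
  have q1 : Filter.Tendsto (fun x => g x / x) (nhdsWithin 0 (Set.Ioi 0)) (nhds (g' 0)) := by
    have := hasDerivWithinAt_iff_tendsto_slope.1 (hg 0 hm)
    rw [hdiff, nhdsWithin_Ioo_eq_nhdsGT hε] at this
    refine this.congr fun x => ?_
    simp [slope_def_field, h0]
  have q2 : Filter.Tendsto (fun x => g'' x / x) (nhdsWithin 0 (Set.Ioi 0)) (nhds (g''' 0)) := by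
    have := hasDerivWithinAt_iff_tendsto_slope.1 (hg'' 0 hm)
    rw [hdiff, nhdsWithin_Ioo_eq_nhdsGT hε] at this
    refine this.congr fun x => ?_
    simp [slope_def_field, h2]
  have q3 : Filter.Tendsto (fun x => (g x - x * g' x) / x ^ 3) (nhdsWithin 0 (Set.Ioi 0))
      (nhds (-(g''' 0) / 3)) := by
    refine HasDerivAt.lhopital_zero_right_on_Ioo (f' := fun x => - (x * g'' x))
      (g' := fun x => 3 * x ^ 2) hε ?_ ?_ ?_ ?_ ?_ ?_
    · intro x hx
      have hn : Set.Ico 0 ε ∈ nhds x := Ico_mem_nhds hx.1 hx.2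
      have hx' := Set.Ioo_subset_Ico_self hx
      have := ((hg x hx').hasDerivAt hn).sub ((hasDerivAt_id x).mul ((hg' x hx').hasDerivAt hn))
      refine this.congr_deriv ?_
      simp
    · intro x hx
      simpa using hasDerivAt_pow 3 x
    · intro x hx
      have := hx.1
      positivity
    · simpa using tg.sub (tid.mul tg')
    · simpa using tid.pow 3
    · refine (q2.neg.div_const 3).congr' ?_
      filter_upwards [self_mem_nhdsWithin] with x hx
      have : x ≠ 0 := ne_of_gt hx
      field_simp
  have key := ((((q3.const_mul 4).sub (tid.mul tg)).sub ((q1.mul tg').const_mul 4)).add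
    (q2.const_mul 8)).add (tg3.const_mul 4)
  have hz := tendsto_nhds_unique (key.congr' (f₂ := fun _ => (0:ℝ)) (by
    filter_upwards [Ioo_mem_nhdsGT hε] with x hx
    have hx0 : x ≠ 0 := ne_of_gt hx.1
    have := hode x (Set.Ioo_subset_Ico_self hx)
    field_simp
    linear_combination this)) tendsto_const_nhds
  linear_combination (3 / 32) * hz
end

section
/- Let ε > 0 and let g : [0, ε) → ℝ be three times continuously differentiable, satisfy the ODE 4g(η) − η⁴g(η) − 4ηg'(η) − 4η²g(η)g'(η) + 8η²g''(η) + 4η³g'''(η) = 0 on [0, ε), with g(0) = 0, g''(0) = 0 and g'(0) ≠ 0. Then there exists δ > 0 such that g''(η) > 0 for all η ∈ (0, δ); in particular g is convex in a right neighborhood of 0. -/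
/-- Let `ε > 0` and let `g : [0, ε) → ℝ` be a `C³` solution of the ODE on
`[0, ε)` with `g(0) = 0`, `g''(0) = 0` and `g'(0) ≠ 0`. Then there exists `δ > 0` such that
`g''(η) > 0` for all `η ∈ (0, δ)`; in particular `g` is convex in a right neighborhood of `0`. -/
theorem stmt14 (ε : ℝ) (hε : 0 < ε)
    (g g' g'' g''' : ℝ → ℝ)
    (hg : ∀ η ∈ Set.Ico 0 ε, HasDerivWithinAt g (g' η) (Set.Ico 0 ε) η)
    (hg' : ∀ η ∈ Set.Ico 0 ε, HasDerivWithinAt g' (g'' η) (Set.Ico 0 ε) η)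
    (hg'' : ∀ η ∈ Set.Ico 0 ε, HasDerivWithinAt g'' (g''' η) (Set.Ico 0 ε) η)
    (hg''' : ContinuousOn g''' (Set.Ico 0 ε))
    (hode : ∀ η ∈ Set.Ico 0 ε,
      4 * g η - η ^ 4 * g η - 4 * η * g' η - 4 * η ^ 2 * g η * g' η
        + 8 * η ^ 2 * g'' η + 4 * η ^ 3 * g''' η = 0)
    (h0 : g 0 = 0) (h2 : g'' 0 = 0) (h1 : g' 0 ≠ 0) :
    ∃ δ > 0, ∀ η : ℝ, 0 < η → η < δ → 0 < g'' η := by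
  have h0m : (0:ℝ) ∈ Set.Ico 0 ε := ⟨le_refl _, hε⟩
  have hle : nhdsWithin (0:ℝ) (Set.Ioi 0) ≤ nhdsWithin 0 (Set.Ico 0 ε) := by
    rw [← nhdsWithin_Ioo_eq_nhdsGT hε]
    exact nhdsWithin_mono _ Set.Ioo_subset_Ico_self
  have hev : ∀ᶠ x in nhdsWithin (0:ℝ) (Set.Ioi 0), x ∈ Set.Ioo 0 ε := Ioo_mem_nhdsGT hε
  have hslope : ∀ (f : ℝ → ℝ) (d : ℝ), f 0 = 0 → HasDerivWithinAt f d (Set.Ico 0 ε) 0 →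
      Filter.Tendsto (fun x => f x / x) (nhdsWithin 0 (Set.Ioi 0)) (nhds d) := by
    intro f d hf h
    have h' := h.mono (Set.Ioo_subset_Ico_self)
    rw [hasDerivWithinAt_iff_tendsto_slope' (by simp), nhdsWithin_Ioo_eq_nhdsGT hε] at h'
    refine h'.congr ?_
    intro x
    simp [slope_def_field, hf]
  have t0 := hslope g _ h0 (hg 0 h0m)
  have t2 := hslope g'' _ h2 (hg'' 0 h0m)
  have t1 : Filter.Tendsto g' (nhdsWithin 0 (Set.Ioi 0)) (nhds (g' 0)) :=
    ((hg' 0 h0m).continuousWithinAt.tendsto).mono_left hle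
  have tg : Filter.Tendsto g (nhdsWithin 0 (Set.Ioi 0)) (nhds 0) := by
    have := ((hg 0 h0m).continuousWithinAt.tendsto).mono_left hle
    rwa [h0] at this
  have t3 : Filter.Tendsto g''' (nhdsWithin 0 (Set.Ioi 0)) (nhds (g''' 0)) :=
    ((hg''' 0 h0m).tendsto).mono_left hle
  have tid : Filter.Tendsto (fun x : ℝ => x) (nhdsWithin 0 (Set.Ioi 0)) (nhds 0) :=
    Filter.tendsto_id.mono_left nhdsWithin_le_nhds
  have tL : Filter.Tendsto (fun x => (g x - x * g' x) / x ^ 3) (nhdsWithin 0 (Set.Ioi 0))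
      (nhds (-(g''' 0) / 3)) := by
    refine HasDerivAt.lhopital_zero_nhdsGT (f' := fun x => -(x * g'' x))
      (g' := fun x => 3 * x ^ 2) ?_ ?_ ?_ ?_ ?_ ?_
    · filter_upwards [hev] with x hx
      have hm : x ∈ Set.Ico 0 ε := Set.Ioo_subset_Ico_self hx
      have hn : Set.Ico 0 ε ∈ nhds x := Ico_mem_nhds hx.1 hx.2
      have := ((hg x hm).hasDerivAt hn).sub
        ((hasDerivAt_id x).mul ((hg' x hm).hasDerivAt hn))
      refine this.congr_deriv ?_
      simp
    · filter_upwards [hev] with x hx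
      simpa using hasDerivAt_pow 3 x
    · filter_upwards [hev] with x hx
      have := hx.1
      positivity
    · simpa using tg.sub (tid.mul t1)
    · simpa using tid.pow 3
    · refine (t2.neg.div_const 3).congr' ?_
      filter_upwards [hev] with x hx
      have := hx.1.ne'
      field_simp
  have tS := ((((tL.const_mul 4).sub ((tid.pow 2).mul t0)).sub
    ((t0.mul t1).const_mul 4)).add (t2.const_mul 8)).add (t3.const_mul 4)
  have tz := tendsto_nhds_unique (tS.congr' (f₂ := fun _ => (0:ℝ)) (by
    filter_upwards [hev] with x hx
    have hx0 := hx.1.ne'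
    have := hode x (Set.Ioo_subset_Ico_self hx)
    field_simp
    linear_combination this)) tendsto_const_nhds
  have hc : 0 < g''' 0 := by
    have : 0 < g' 0 * g' 0 := mul_self_pos.mpr h1
    nlinarith
  have hfin : ∀ᶠ x in nhdsWithin (0:ℝ) (Set.Ioi 0), 0 < g'' x := by
    filter_upwards [hev, t2.eventually (lt_mem_nhds hc)] with x hx h
    have := mul_pos h hx.1
    rwa [div_mul_cancel₀ _ hx.1.ne'] at this
  obtain ⟨δ, hδ, h⟩ := mem_nhdsGT_iff_exists_Ioo_subset.mp hfin
  exact ⟨δ, hδ, fun η a b => h ⟨a, b⟩⟩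
end
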